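/- arXiv:1803.00109 — 4 statements merged into one kernel-verified Lean document; each statement's English description precedes it below -/
import Mathlib

section
/- Let {E_ℓ} be a Kraus family on the D×D complex matrices whose channel is faithful, and let J be a conserved quantity with phase λ, i.e., ∑_ℓ E_ℓ† J E_ℓ = e^{−iλ} J for some real λ. Then for every index ℓ one has J E_ℓ = e^{−iλ} E_ℓ J. -/
open Matrix ComplexOrder

/-!
Put `X ℓ = J Eℓ - c Eℓ J` with `c = e^{-iλ}`. Expanding the squares shows that `∑ ℓ, X ℓ† X ℓ` is
the defect `Φ(J†J) - J†J` in the Kadison-Schwarz inequality of the dual channel `Φ`, because `J`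
is an eigenvector of `Φ` whose eigenvalue lies on the unit circle. An invariant state annihilates
this defect, and a faithful one then annihilates each `X ℓ`. For matrices the state is
`x ↦ tr (ρ x)`.
-/

section StarRing

variable {ι 𝕜 A R : Type*} [Fintype ι] [CommRing 𝕜] [StarRing 𝕜] [Ring A] [StarRing A]
  [Algebra 𝕜 A] [StarModule 𝕜 A]

/-- The Heisenberg-picture action `x ↦ ∑ ℓ, Eℓ† x Eℓ` of the Kraus operators `E`, in an arbitrary
star ring. No normalization of `E` is built in. -/
def krausDual (E : ι → A) (x : A) : A :=
  ∑ ℓ, star (E ℓ) * x * E ℓ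

theorem star_krausDual (E : ι → A) (x : A) : star (krausDual E x) = krausDual E (star x) := by
  simp only [krausDual, star_sum, star_mul, star_star, mul_assoc]

theorem sum_star_mul_self_sub_smul (E : ι → A) (J : A) (c : 𝕜) :
    ∑ ℓ, star (J * E ℓ - c • (E ℓ * J)) * (J * E ℓ - c • (E ℓ * J)) =
      krausDual E (star J * J) - c • (krausDual E (star J) * J)
        - star c • (star J * krausDual E J) + (star c * c) • (star J * krausDual E 1 * J) := by
  simp only [krausDual, Finset.sum_mul, Finset.mul_sum, Finset.smul_sum,
    ← Finset.sum_sub_distrib, ← Finset.sum_add_distrib]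
  refine Finset.sum_congr rfl fun ℓ _ => ?_
  simp only [star_sub, star_smul, star_mul, sub_mul, mul_sub, smul_mul_assoc, mul_smul_comm,
    smul_sub, smul_smul, mul_assoc, one_mul, mul_comm c]
  abel

theorem sum_star_mul_self_eq_krausDual_sub {E : ι → A} {J : A} {c : 𝕜}
    (hE : krausDual E 1 = 1) (hc : star c * c = 1) (hJ : krausDual E J = c • J) :
    ∑ ℓ, star (J * E ℓ - c • (E ℓ * J)) * (J * E ℓ - c • (E ℓ * J)) =
      krausDual E (star J * J) - star J * J := by
  have hJ_star : krausDual E (star J) = star c • star J := by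
    rw [← star_krausDual, hJ, star_smul]
  rw [sum_star_mul_self_sub_smul, hE, hJ, hJ_star]
  simp only [smul_mul_assoc, mul_smul_comm, smul_smul, mul_comm c, hc, one_smul, mul_one]
  abel

variable [AddCommGroup R] [PartialOrder R]

/-- A faithful positive functional on a star ring: it is strictly positive on `x† x` for every
`x ≠ 0`. Only additivity is built in, and the values may lie in any ordered group. -/
def IsFaithfulPositive (ω : A →+ R) : Prop :=
  ∀ ⦃x : A⦄, x ≠ 0 → 0 < ω (star x * x)

namespace IsFaithfulPositive

variable {ω : A →+ R}

theorem map_star_mul_self_nonneg (hω : IsFaithfulPositive ω) (x : A) : 0 ≤ ω (star x * x) := by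
  obtain rfl | hx := eq_or_ne x 0
  · simp
  · exact (hω hx).le

theorem eq_zero_of_map_sum_eq_zero [IsOrderedAddMonoid R] (hω : IsFaithfulPositive ω)
    {X : ι → A} (hX : ω (∑ ℓ, star (X ℓ) * X ℓ) = 0) (ℓ : ι) : X ℓ = 0 := by
  rw [map_sum, Finset.sum_eq_zero_iff_of_nonneg fun ℓ _ => hω.map_star_mul_self_nonneg (X ℓ)] at hX
  by_contra hne
  exact (hω hne).ne' (hX ℓ (Finset.mem_univ ℓ))

end IsFaithfulPositive

theorem conserved_quantity_commutes_with_kraus_general [IsOrderedAddMonoid R]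
    {E : ι → A} (hE : ∑ ℓ, star (E ℓ) * E ℓ = 1)
    {ω : A →+ R} (hω : IsFaithfulPositive ω) (hinv : ∀ x, ω (krausDual E x) = ω x)
    {J : A} {c : 𝕜} (hc : star c * c = 1) (hJ : krausDual E J = c • J) (ℓ : ι) :
    J * E ℓ = c • (E ℓ * J) := by
  have hE_one : krausDual E 1 = 1 := by simpa only [krausDual, mul_one] using hE
  have hdefect : ω (krausDual E (star J * J) - star J * J) = 0 := by
    rw [map_sub, hinv, sub_self]
  rw [← sum_star_mul_self_eq_krausDual_sub hE_one hc hJ] at hdefect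
  exact sub_eq_zero.1 (hω.eq_zero_of_map_sum_eq_zero hdefect ℓ)

end StarRing

section Matrix

variable {ι m n R : Type*} [Fintype ι] [Fintype m] [Fintype n]

theorem trace_mul_mul_conjTranspose_pos [Ring R] [StarRing R] [PartialOrder R]
    [IsOrderedAddMonoid R] {ρ : Matrix n n R} (hρ : ρ.PosDef) {X : Matrix m n R} (hX : X ≠ 0) :
    0 < trace (X * ρ * Xᴴ) := by
  have htrace : trace (X * ρ * Xᴴ) = ∑ i, X i ⬝ᵥ ρ *ᵥ star (X i) :=
    Finset.sum_congr rfl fun i _ => by rw [dotProduct_mulVec]; rfl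
  have hrow_nonneg (i : m) : 0 ≤ X i ⬝ᵥ ρ *ᵥ star (X i) := by
    simpa only [star_star] using hρ.posSemidef.dotProduct_mulVec_nonneg (star (X i))
  have hrow_pos (i : m) (hi : X i ≠ 0) : 0 < X i ⬝ᵥ ρ *ᵥ star (X i) := by
    simpa only [star_star] using hρ.dotProduct_mulVec_pos (star_ne_zero.2 hi)
  obtain ⟨i, hi⟩ := Function.ne_iff.1 hX
  rw [htrace]
  exact Finset.sum_pos' (fun i _ => hrow_nonneg i) ⟨i, Finset.mem_univ i, hrow_pos i hi⟩

variable [CommRing R]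

/-- The functional `x ↦ tr (ρ x)` that a density matrix `ρ` defines on observables `x`. Neither
positivity nor the normalization `tr ρ = 1` is built in. -/
def weightedTrace (ρ : Matrix n n R) : Matrix n n R →+ R :=
  (traceAddMonoidHom n R).comp (AddMonoidHom.mulLeft ρ)

theorem weightedTrace_apply (ρ x : Matrix n n R) : weightedTrace ρ x = trace (ρ * x) :=
  rfl

variable [StarRing R] [DecidableEq n]

theorem weightedTrace_krausDual (E : ι → Matrix n n R) (ρ x : Matrix n n R) :
    weightedTrace ρ (krausDual E x) = weightedTrace (∑ ℓ, E ℓ * ρ * (E ℓ)ᴴ) x := by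
  simp only [weightedTrace_apply, krausDual, Finset.mul_sum, Finset.sum_mul, trace_sum]
  refine Finset.sum_congr rfl fun ℓ _ => ?_
  calc trace (ρ * (star (E ℓ) * x * E ℓ))
      = trace (E ℓ * (ρ * (star (E ℓ) * x))) := trace_mul_cycle' ..
    _ = trace (E ℓ * ρ * (E ℓ)ᴴ * x) := by
      rw [star_eq_conjTranspose]
      simp only [Matrix.mul_assoc]

theorem isFaithfulPositive_weightedTrace [PartialOrder R] [IsOrderedAddMonoid R]
    {ρ : Matrix n n R} (hρ : ρ.PosDef) :
    IsFaithfulPositive (weightedTrace ρ) := by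
  intro X hX
  rw [weightedTrace_apply, star_eq_conjTranspose, trace_mul_cycle', ← Matrix.mul_assoc]
  exact trace_mul_mul_conjTranspose_pos hρ hX

end Matrix

theorem star_exp_neg_I_mul_mul_self (t : ℝ) :
    star (Complex.exp (-(Complex.I * t))) * Complex.exp (-(Complex.I * t)) = 1 := by
  rw [Complex.star_def, Complex.conj_mul', Complex.norm_exp]
  simp

/-- For a faithful Kraus channel, any conserved quantity `J` with phase `λ`
(i.e. `∑ ℓ, Eℓᴴ J Eℓ = e^{-iλ} J`) commutes with every Kraus operator up to the phase:
`J Eℓ = e^{-iλ} Eℓ J`. -/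
theorem conserved_quantity_commutes_with_kraus
    {D : ℕ} {ι : Type*} [Fintype ι]
    (E : ι → Matrix (Fin D) (Fin D) ℂ)
    (hKraus : ∑ ℓ, (E ℓ)ᴴ * E ℓ = 1)
    (hFaithful : ∃ ρ : Matrix (Fin D) (Fin D) ℂ,
      ρ.PosDef ∧ ∑ ℓ, E ℓ * ρ * (E ℓ)ᴴ = ρ)
    (J : Matrix (Fin D) (Fin D) ℂ) (lam : ℝ)
    (hJ : ∑ ℓ, (E ℓ)ᴴ * J * E ℓ = Complex.exp (-(Complex.I * (lam : ℂ))) • J) :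
    ∀ ℓ, J * E ℓ = Complex.exp (-(Complex.I * (lam : ℂ))) • (E ℓ * J) := by
  obtain ⟨ρ, hρ, hfix⟩ := hFaithful
  exact conserved_quantity_commutes_with_kraus_general hKraus (isFaithfulPositive_weightedTrace hρ)
    (fun x => by rw [weightedTrace_krausDual, hfix]) (star_exp_neg_I_mul_mul_self lam) hJ
end

section
/- Let {E_ℓ} be a Kraus family on the D×D complex matrices whose channel is faithful, and let J be a nonzero diagonalizable D×D matrix that is a conserved quantity with phase λ, i.e., ∑_ℓ E_ℓ† J E_ℓ = e^{−iλ} J. Then there exist an integer n and a positive integer N with N ≤ D such that λ = 2πn/N; equivalently, e^{−iNλ} = 1 for some positive integer N ≤ D. -/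
open Matrix ComplexOrder

/-!
Put `c = e^{-iλ}` and `A_ℓ = J E_ℓ - c E_ℓ J`. Since `|c| = 1`, expanding gives
`∑ A_ℓ† A_ℓ = E†(J†J) - J†J`, whose expectation in the stationary state `ρ` vanishes; as `ρ` is
positive definite, every `A_ℓ` is zero. So `J E_ℓ = c E_ℓ J`, and each `E_ℓ` maps the `μ`-eigenspace
of `J` into its `cμ`-eigenspace. The Kraus condition prevents all the `E_ℓ` from killing an
eigenvector at once, so multiplication by `c` preserves the spectrum of `J`. As soon as `J` has a
nonzero eigenvalue, that is, unless `J` is nilpotent, the orbit of this eigenvalue under `c` lies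
among the at most `D` eigenvalues, which forces `c ^ N = 1` for some `1 ≤ N ≤ D`.
-/

section TwistedCommutation

variable {ι m n R 𝕜 : Type*} [Fintype ι] [Fintype m] [Fintype n]

lemma trace_mul_mul_conjTranspose_eq_zero_iff [RCLike 𝕜] {ρ : Matrix n n 𝕜} (hρ : ρ.PosDef)
    {A : Matrix m n 𝕜} : (A * ρ * Aᴴ).trace = 0 ↔ A = 0 := by
  refine ⟨fun htrace ↦ ?_, by rintro rfl; simp⟩
  have hzero : A * ρ * Aᴴ = 0 :=
    (hρ.posSemidef.mul_mul_conjTranspose_same A).trace_eq_zero_iff.1 htrace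
  rw [← conjTranspose_eq_zero, ← mulVec_injective.eq_iff]
  ext1 x
  rw [zero_mulVec]
  by_contra hx
  refine (hρ.dotProduct_mulVec_pos hx).ne' ?_
  rw [star_mulVec, conjTranspose_conjTranspose, ← dotProduct_mulVec, mulVec_mulVec,
    mulVec_mulVec, hzero, zero_mulVec, dotProduct_zero]

lemma trace_mul_sum_conjTranspose_mul_mul [CommSemiring R] [StarRing R] (E : ι → Matrix m n R)
    (ρ : Matrix n n R) (X : Matrix m m R) :
    (ρ * ∑ ℓ, (E ℓ)ᴴ * X * E ℓ).trace = ((∑ ℓ, E ℓ * ρ * (E ℓ)ᴴ) * X).trace := by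
  simp only [Finset.mul_sum, Finset.sum_mul, trace_sum]
  refine Finset.sum_congr rfl fun ℓ _ ↦ ?_
  rw [← Matrix.mul_assoc, trace_mul_comm]
  simp only [Matrix.mul_assoc]

lemma sum_conjTranspose_mul_self_of_twisted_commutator [DecidableEq n] [CommRing R] [StarRing R]
    {E : ι → Matrix n n R} {J : Matrix n n R} {c : R} (hE : ∑ ℓ, (E ℓ)ᴴ * E ℓ = 1)
    (hc : star c * c = 1) (hJ : ∑ ℓ, (E ℓ)ᴴ * J * E ℓ = c • J) :
    ∑ ℓ, (J * E ℓ - c • (E ℓ * J))ᴴ * (J * E ℓ - c • (E ℓ * J)) =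
      ∑ ℓ, (E ℓ)ᴴ * (Jᴴ * J) * E ℓ - Jᴴ * J := by
  have hJ_adjoint : ∑ ℓ, (E ℓ)ᴴ * Jᴴ * E ℓ = star c • Jᴴ := by
    simpa [conjTranspose_sum, Matrix.mul_assoc] using congrArg conjTranspose hJ
  have hexpand (ℓ : ι) : (J * E ℓ - c • (E ℓ * J))ᴴ * (J * E ℓ - c • (E ℓ * J)) =
      (E ℓ)ᴴ * (Jᴴ * J) * E ℓ - c • ((E ℓ)ᴴ * Jᴴ * E ℓ * J)
        - star c • (Jᴴ * ((E ℓ)ᴴ * J * E ℓ)) + Jᴴ * ((E ℓ)ᴴ * E ℓ) * J := by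
    simp only [conjTranspose_sub, conjTranspose_smul, conjTranspose_mul, Matrix.sub_mul,
      Matrix.mul_sub, Matrix.smul_mul, Matrix.mul_smul, smul_sub, smul_smul, hc, one_smul,
      mul_comm c (star c), Matrix.mul_assoc]
    abel
  calc ∑ ℓ, (J * E ℓ - c • (E ℓ * J))ᴴ * (J * E ℓ - c • (E ℓ * J))
    _ = ∑ ℓ, (E ℓ)ᴴ * (Jᴴ * J) * E ℓ - c • ((∑ ℓ, (E ℓ)ᴴ * Jᴴ * E ℓ) * J)
          - star c • (Jᴴ * ∑ ℓ, (E ℓ)ᴴ * J * E ℓ) + Jᴴ * (∑ ℓ, (E ℓ)ᴴ * E ℓ) * J := by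
      simp only [hexpand, Finset.sum_add_distrib, Finset.sum_sub_distrib, Finset.smul_sum,
        Finset.sum_mul, Finset.mul_sum]
    _ = ∑ ℓ, (E ℓ)ᴴ * (Jᴴ * J) * E ℓ - Jᴴ * J := by
      simp only [hJ, hJ_adjoint, hE, Matrix.smul_mul, Matrix.mul_smul, smul_smul, hc,
        mul_comm c (star c), one_smul, Matrix.mul_one]
      abel

theorem mul_eq_smul_mul_of_conserved [DecidableEq n] [RCLike 𝕜] {E : ι → Matrix n n 𝕜}
    {ρ J : Matrix n n 𝕜} {c : 𝕜} (hE : ∑ ℓ, (E ℓ)ᴴ * E ℓ = 1) (hρ : ρ.PosDef)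
    (hρ_fixed : ∑ ℓ, E ℓ * ρ * (E ℓ)ᴴ = ρ) (hc : star c * c = 1)
    (hJ : ∑ ℓ, (E ℓ)ᴴ * J * E ℓ = c • J) (ℓ : ι) : J * E ℓ = c • (E ℓ * J) := by
  set A : ι → Matrix n n 𝕜 := fun k ↦ J * E k - c • (E k * J) with hA
  have htrace : ∑ k, (A k * ρ * (A k)ᴴ).trace = 0 := calc
    ∑ k, (A k * ρ * (A k)ᴴ).trace = (ρ * ∑ k, (A k)ᴴ * A k).trace := by
      rw [Finset.mul_sum, trace_sum]
      exact Finset.sum_congr rfl fun k _ ↦ by rw [← trace_mul_cycle, Matrix.mul_assoc]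
    _ = (ρ * ∑ k, (E k)ᴴ * (Jᴴ * J) * E k).trace - (ρ * (Jᴴ * J)).trace := by
      rw [hA, sum_conjTranspose_mul_self_of_twisted_commutator hE hc hJ, Matrix.mul_sub, trace_sub]
    _ = 0 := by rw [trace_mul_sum_conjTranspose_mul_mul, hρ_fixed, sub_self]
  have hnonneg (k : ι) : 0 ≤ (A k * ρ * (A k)ᴴ).trace :=
    (hρ.posSemidef.mul_mul_conjTranspose_same (A k)).trace_nonneg
  have hzero : (A ℓ * ρ * (A ℓ)ᴴ).trace = 0 :=
    (Finset.sum_eq_zero_iff_of_nonneg fun k _ ↦ hnonneg k).1 htrace ℓ (Finset.mem_univ ℓ)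
  exact sub_eq_zero.1 ((trace_mul_mul_conjTranspose_eq_zero_iff hρ).1 hzero)

lemma eq_zero_of_forall_mulVec_eq_zero_of_sum_conjTranspose_mul_self [DecidableEq n] [Semiring R]
    [StarRing R] {E : ι → Matrix m n R} (hE : ∑ ℓ, (E ℓ)ᴴ * E ℓ = 1) {v : n → R}
    (hv : ∀ ℓ, E ℓ *ᵥ v = 0) : v = 0 := by
  rw [← one_mulVec v, ← hE, sum_mulVec]
  exact Finset.sum_eq_zero fun ℓ _ ↦ by rw [← mulVec_mulVec, hv, mulVec_zero]

end TwistedCommutation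

section Eigenvalues

variable {ι K R V : Type*}

lemma hasEigenvalue_mul_of_mul_eq_smul_mul [CommRing R] [AddCommGroup V] [Module R V]
    {f : Module.End R V} {g : ι → Module.End R V} {c μ : R}
    (hfg : ∀ i, f * g i = c • (g i * f)) (hg : ∀ v, (∀ i, g i v = 0) → v = 0)
    (hμ : f.HasEigenvalue μ) : f.HasEigenvalue (c * μ) := by
  obtain ⟨v, hv⟩ := hμ.exists_hasEigenvector
  obtain ⟨i, hi⟩ : ∃ i, g i v ≠ 0 := by
    by_contra! hall
    exact hv.2 (hg v hall)
  refine Module.End.hasEigenvalue_of_hasEigenvector (x := g i v)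
    ⟨Module.End.mem_eigenspace_iff.2 ?_, hi⟩
  calc f (g i v) = c • g i (f v) := LinearMap.congr_fun (hfg i) v
    _ = (c * μ) • g i v := by rw [hv.apply_eq_smul, map_smul, smul_smul]

lemma ncard_setOf_hasEigenvalue_le_finrank [CommRing R] [IsDomain R] [AddCommGroup V] [Module R V]
    [Module.IsTorsionFree R V] [Module.Finite R V] (f : Module.End R V) :
    {μ | f.HasEigenvalue μ}.ncard ≤ Module.finrank R V := by
  have hindep := f.eigenspaces_iSupIndep
  have := hindep.fintypeNeBotOfFiniteDimensional
  have hcard : {μ | f.HasEigenvalue μ}.ncard = Fintype.card {μ // f.eigenspace μ ≠ ⊥} := by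
    rw [← Nat.card_eq_fintype_card, ← Nat.card_coe_set_eq]
    rfl
  exact hcard.trans_le hindep.subtype_ne_bot_le_finrank

lemma exists_hasEigenvalue_ne_zero_of_not_isNilpotent [Field K] [IsAlgClosed K] [AddCommGroup V]
    [Module K V] [FiniteDimensional K V] {f : Module.End K V} (hf : ¬IsNilpotent f) :
    ∃ μ, f.HasEigenvalue μ ∧ μ ≠ 0 := by
  contrapose! hf
  have hbot (μ : K) (hμ : μ ≠ 0) : f.maxGenEigenspace μ = ⊥ := by
    by_contra hne
    exact hμ (hf μ (Module.End.HasUnifEigenvalue.lt zero_lt_one hne))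
  have htop : f.maxGenEigenspace 0 = ⊤ := by
    rw [eq_top_iff, ← Module.End.iSup_maxGenEigenspace_eq_top f]
    refine iSup_le fun μ ↦ ?_
    rcases eq_or_ne μ 0 with rfl | hμ
    · exact le_rfl
    · exact (hbot μ hμ).trans_le bot_le
  refine ⟨Module.finrank K V, LinearMap.ker_eq_top.1 ?_⟩
  rw [← htop, Module.End.maxGenEigenspace_eq_genEigenspace_finrank,
    Module.End.genEigenspace_nat, zero_smul, sub_zero]

lemma exists_pow_eq_one_of_mapsTo_mul_left {M₀ : Type*} [MonoidWithZero M₀] [IsCancelMulZero M₀]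
    {s : Set M₀} (hs : s.Finite) {c x : M₀} (hc : c ≠ 0) (hmaps : Set.MapsTo (c * ·) s s)
    (hxs : x ∈ s) (hx : x ≠ 0) : ∃ N, 0 < N ∧ N ≤ s.ncard ∧ c ^ N = 1 := by
  have := hs.fintype
  let y : s := ⟨x, hxs⟩
  have hinj : Function.Injective (hmaps.restrict (c * ·) s s) :=
    hmaps.restrict_inj.2 (mul_right_injective₀ hc).injOn
  refine ⟨Function.minimalPeriod hmaps.restrict y,
    Function.minimalPeriod_pos_of_mem_periodicPts (hinj.mem_periodicPts y), ?_, ?_⟩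
  · rw [← Nat.card_coe_set_eq, Nat.card_eq_fintype_card]
    exact Function.minimalPeriod_le_card
  · have hperiod := congrArg Subtype.val
      (Function.iterate_minimalPeriod (f := hmaps.restrict) (x := y))
    rw [hmaps.coe_iterate_restrict, mul_left_iterate] at hperiod
    exact (mul_eq_right₀ hx).1 hperiod

theorem exists_pow_eq_one_of_hasEigenvalue_mul [CommRing R] [IsDomain R] [AddCommGroup V]
    [Module R V] [Module.IsTorsionFree R V] [Module.Finite R V] {f : Module.End R V} {c μ : R}
    (hc : c ≠ 0) (hmul : ∀ ν, f.HasEigenvalue ν → f.HasEigenvalue (c * ν))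
    (hμ : f.HasEigenvalue μ) (hμ_ne : μ ≠ 0) :
    ∃ N, 0 < N ∧ N ≤ Module.finrank R V ∧ c ^ N = 1 := by
  obtain ⟨N, hN, hN_le, hpow⟩ :=
    exists_pow_eq_one_of_mapsTo_mul_left f.finite_hasEigenvalue hc hmul hμ hμ_ne
  exact ⟨N, hN, hN_le.trans (ncard_setOf_hasEigenvalue_le_finrank f), hpow⟩

end Eigenvalues

lemma eq_zero_of_isNilpotent_of_eq_mul_diagonal_mul_inv {n R : Type*} [Fintype n] [DecidableEq n]
    [CommRing R] [IsReduced R] {J P : Matrix n n R} {d : n → R} (hP : IsUnit P.det)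
    (hJ : J = P * diagonal d * P⁻¹) (hnil : IsNilpotent J) : J = 0 := by
  have hconj : diagonal d = P⁻¹ * J * P := by simp [hJ, Matrix.mul_assoc, hP]
  obtain ⟨k, hk⟩ := hnil
  lift P to (Matrix n n R)ˣ using (isUnit_iff_isUnit_det P).2 hP
  have hdiag : diagonal (d ^ k) = 0 := by
    rw [← diagonal_pow, hconj, ← coe_units_inv, Units.conj_pow', hk, Matrix.mul_zero,
      Matrix.zero_mul]
  have hd : d = 0 := eq_zero_of_pow_eq_zero (diagonal_eq_zero.1 hdiag)
  simp [hJ, hd]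

lemma exists_eq_two_pi_mul_div_of_exp_pow_eq_one {x : ℝ} {N : ℕ} (hN : N ≠ 0)
    (hpow : Complex.exp (-(Complex.I * x)) ^ N = 1) : ∃ k : ℤ, x = 2 * Real.pi * k / N := by
  rw [← Complex.exp_nat_mul, Complex.exp_eq_one_iff] at hpow
  obtain ⟨k, hk⟩ := hpow
  have him : -(N * x) = k * (2 * Real.pi) := by simpa using congrArg Complex.im hk
  refine ⟨-k, ?_⟩
  rw [eq_div_iff (Nat.cast_ne_zero.2 hN), Int.cast_neg]
  linarith

theorem phase_of_diagonalizable_conserved_quantity_general {n ι : Type*} [Fintype n]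
    [DecidableEq n] [Fintype ι] (E : ι → Matrix n n ℂ) (hKraus : ∑ ℓ, (E ℓ)ᴴ * E ℓ = 1)
    (hFaithful : ∃ ρ : Matrix n n ℂ, ρ.PosDef ∧ ∑ ℓ, E ℓ * ρ * (E ℓ)ᴴ = ρ)
    (J : Matrix n n ℂ) (lam : ℝ) (hnil : ¬IsNilpotent J)
    (hJ : ∑ ℓ, (E ℓ)ᴴ * J * E ℓ = Complex.exp (-(Complex.I * (lam : ℂ))) • J) :
    ∃ (N : ℕ) (k : ℤ), 0 < N ∧ N ≤ Fintype.card n ∧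
      lam = 2 * Real.pi * (k : ℝ) / (N : ℝ) := by
  obtain ⟨ρ, hρ, hρ_fixed⟩ := hFaithful
  set c : ℂ := Complex.exp (-(Complex.I * (lam : ℂ))) with hc
  have hc_unitary : star c * c = 1 := by
    have hnorm : ‖c‖ = 1 := by simp [hc, Complex.norm_exp]
    simpa [hnorm] using Complex.conj_mul' c
  have hcomm := mul_eq_smul_mul_of_conserved hKraus hρ hρ_fixed hc_unitary hJ
  have hcomm_toLin' (ℓ : ι) : toLin' J * toLin' (E ℓ) = c • (toLin' (E ℓ) * toLin' J) := by
    simp only [Module.End.mul_eq_comp, ← toLin'_mul, hcomm ℓ, map_smul]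
  obtain ⟨μ, hμ, hμ_ne⟩ := exists_hasEigenvalue_ne_zero_of_not_isNilpotent
    ((isNilpotent_toLin'_iff J).not.2 hnil)
  obtain ⟨N, hN, hN_le, hpow⟩ := exists_pow_eq_one_of_hasEigenvalue_mul (Complex.exp_ne_zero _)
    (fun ν ↦ hasEigenvalue_mul_of_mul_eq_smul_mul hcomm_toLin' fun _ ↦
      eq_zero_of_forall_mulVec_eq_zero_of_sum_conjTranspose_mul_self hKraus) hμ hμ_ne
  obtain ⟨k, hk⟩ := exists_eq_two_pi_mul_div_of_exp_pow_eq_one hN.ne' hpow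
  exact ⟨N, k, hN, by simpa using hN_le, hk⟩

/-- For a faithful Kraus channel, the phase `λ` of a nonzero diagonalizable
conserved quantity is a rational multiple `2πn/N` of `2π` with `N ≤ D`. -/
theorem phase_of_diagonalizable_conserved_quantity
    {D : ℕ} {ι : Type*} [Fintype ι]
    (E : ι → Matrix (Fin D) (Fin D) ℂ)
    (hKraus : ∑ ℓ, (E ℓ)ᴴ * E ℓ = 1)
    (hFaithful : ∃ ρ : Matrix (Fin D) (Fin D) ℂ,
      ρ.PosDef ∧ ∑ ℓ, E ℓ * ρ * (E ℓ)ᴴ = ρ)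
    (J : Matrix (Fin D) (Fin D) ℂ) (lam : ℝ)
    (hJne : J ≠ 0)
    (hdiag : ∃ (P : Matrix (Fin D) (Fin D) ℂ) (d : Fin D → ℂ),
      IsUnit P.det ∧ J = P * Matrix.diagonal d * P⁻¹)
    (hJ : ∑ ℓ, (E ℓ)ᴴ * J * E ℓ = Complex.exp (-(Complex.I * (lam : ℂ))) • J) :
    ∃ (N : ℕ) (n : ℤ), 0 < N ∧ N ≤ D ∧ lam = 2 * Real.pi * (n : ℝ) / (N : ℝ) := by
  obtain ⟨P, d, hP, hJP⟩ := hdiag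
  simpa using phase_of_diagonalizable_conserved_quantity_general E hKraus hFaithful J lam
    (fun hnil ↦ hJne (eq_zero_of_isNilpotent_of_eq_mul_diagonal_mul_inv hP hJP hnil)) hJ
end

section
/- Let {E_ℓ} be a Kraus family on the D×D complex matrices whose channel E is faithful, and let J be a unitary D×D matrix that is a conserved quantity with phase λ. Then the channel is covariant under J: for every D×D matrix ρ, J E(ρ) J† = E(J ρ J†). -/
open Matrix ComplexOrder

/-!
Write `Φ` for the Heisenberg-picture map `A ↦ ∑ ℓ, (E ℓ)ᴴ * A * E ℓ`. The gap in the Kadison–Schwarz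
inequality `Φ(A)ᴴ Φ(A) ≤ Φ(Aᴴ A)` is the sum of squares `∑ ℓ, (Y ℓ)ᴴ * Y ℓ` with
`Y ℓ = A * E ℓ - E ℓ * Φ(A)`, so where the inequality is an equality each Kraus operator intertwines
`A` with `Φ(A)`. A unitary `J` with `Φ(J) = c J` and `|c| = 1` attains equality, hence
`J * E ℓ = c • (E ℓ * J)` for each `ℓ`, and the phases cancel in `J E(ρ) Jᴴ`.
-/

section Kraus

variable {ι m n R : Type*} [Fintype ι]

/-- The Schrödinger-picture map with Kraus operators `E ℓ`, acting on states. Input and output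
dimensions may differ, and no normalization is built in. -/
def krausMap [Fintype n] [NonUnitalSemiring R] [Star R] (E : ι → Matrix m n R) (ρ : Matrix n n R) :
    Matrix m m R :=
  ∑ ℓ, E ℓ * ρ * (E ℓ)ᴴ

/-- The Heisenberg-picture map with Kraus operators `E ℓ`, acting on observables: the adjoint of
`krausMap E` for the trace pairing. -/
def krausAdjoint [Fintype m] [NonUnitalSemiring R] [Star R] (E : ι → Matrix m n R)
    (A : Matrix m m R) : Matrix n n R :=
  ∑ ℓ, (E ℓ)ᴴ * A * E ℓ

theorem sum_conjTranspose_mul_self_eq_zero_iff [Fintype m] [NonUnitalRing R] [PartialOrder R]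
    [StarRing R] [StarOrderedRing R] [NoZeroDivisors R] {A : ι → Matrix m n R} :
    ∑ ℓ, (A ℓ)ᴴ * A ℓ = 0 ↔ ∀ ℓ, A ℓ = 0 := by
  refine ⟨fun hA ℓ ↦ ?_, fun hA ↦ by simp [hA]⟩
  ext i j
  have hdiag : ∑ k, star ((A k).col j) ⬝ᵥ (A k).col j = 0 :=
    (Matrix.sum_apply j j _ _).symm.trans (congrFun₂ hA j j)
  rw [Fintype.sum_eq_zero_iff_of_nonneg fun _ ↦ dotProduct_star_self_nonneg _] at hdiag
  exact congrFun (dotProduct_star_self_eq_zero.mp (congrFun hdiag ℓ)) i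

theorem conjTranspose_krausAdjoint [Fintype m] [NonUnitalSemiring R] [StarRing R]
    (E : ι → Matrix m n R) (A : Matrix m m R) : (krausAdjoint E A)ᴴ = krausAdjoint E Aᴴ := by
  simp only [krausAdjoint, conjTranspose_sum, conjTranspose_mul, conjTranspose_conjTranspose,
    Matrix.mul_assoc]

section Ring

variable [Fintype m] [Fintype n] [Ring R] [StarRing R] [DecidableEq n]

theorem krausAdjoint_conjTranspose_mul_self_sub {E : ι → Matrix m n R}
    (hE : ∑ ℓ, (E ℓ)ᴴ * E ℓ = 1) (A : Matrix m m R) :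
    krausAdjoint E (Aᴴ * A) - (krausAdjoint E A)ᴴ * krausAdjoint E A =
      ∑ ℓ, (A * E ℓ - E ℓ * krausAdjoint E A)ᴴ * (A * E ℓ - E ℓ * krausAdjoint E A) := by
  set B := krausAdjoint E A with hB
  have hsquare (ℓ : ι) : (A * E ℓ - E ℓ * B)ᴴ * (A * E ℓ - E ℓ * B) =
      (E ℓ)ᴴ * (Aᴴ * A) * E ℓ - (E ℓ)ᴴ * Aᴴ * E ℓ * B - Bᴴ * ((E ℓ)ᴴ * A * E ℓ)
        + Bᴴ * ((E ℓ)ᴴ * E ℓ) * B := by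
    simp only [conjTranspose_sub, conjTranspose_mul, Matrix.sub_mul, Matrix.mul_sub,
      Matrix.mul_assoc]
    abel
  calc krausAdjoint E (Aᴴ * A) - Bᴴ * B
    _ = krausAdjoint E (Aᴴ * A) - krausAdjoint E Aᴴ * B - Bᴴ * krausAdjoint E A
          + Bᴴ * (∑ ℓ, (E ℓ)ᴴ * E ℓ) * B := by
        rw [hE, Matrix.mul_one, ← conjTranspose_krausAdjoint, ← hB, sub_add_cancel]
    _ = ∑ ℓ, (A * E ℓ - E ℓ * B)ᴴ * (A * E ℓ - E ℓ * B) := by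
        simp only [hsquare, krausAdjoint, Finset.sum_add_distrib, Finset.sum_sub_distrib,
          Matrix.sum_mul, Matrix.mul_sum]

variable [PartialOrder R] [StarOrderedRing R] [NoZeroDivisors R]

theorem mul_eq_mul_krausAdjoint {E : ι → Matrix m n R}
    (hE : ∑ ℓ, (E ℓ)ᴴ * E ℓ = 1) {A : Matrix m m R}
    (hA : krausAdjoint E (Aᴴ * A) = (krausAdjoint E A)ᴴ * krausAdjoint E A) (ℓ : ι) :
    A * E ℓ = E ℓ * krausAdjoint E A := by
  have hgap := krausAdjoint_conjTranspose_mul_self_sub hE A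
  rw [hA, sub_self, eq_comm, sum_conjTranspose_mul_self_eq_zero_iff] at hgap
  exact sub_eq_zero.mp (hgap ℓ)

theorem mul_krausMap_mul_conjTranspose_eq {E : ι → Matrix m n R}
    (hE : ∑ ℓ, (E ℓ)ᴴ * E ℓ = 1) {A : Matrix m m R}
    (hA : krausAdjoint E (Aᴴ * A) = (krausAdjoint E A)ᴴ * krausAdjoint E A) (ρ : Matrix n n R) :
    A * krausMap E ρ * Aᴴ = krausMap E (krausAdjoint E A * ρ * (krausAdjoint E A)ᴴ) := by
  simp only [krausMap, Matrix.mul_sum, Matrix.sum_mul]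
  refine Finset.sum_congr rfl fun ℓ _ ↦ ?_
  calc A * (E ℓ * ρ * (E ℓ)ᴴ) * Aᴴ
    _ = (A * E ℓ) * ρ * (A * E ℓ)ᴴ := by simp only [conjTranspose_mul, Matrix.mul_assoc]
    _ = E ℓ * (krausAdjoint E A * ρ * (krausAdjoint E A)ᴴ) * (E ℓ)ᴴ := by
        rw [mul_eq_mul_krausAdjoint hE hA]
        simp only [conjTranspose_mul, Matrix.mul_assoc]

end Ring

end Kraus

theorem exp_neg_I_mul_ofReal_mem_unitary (x : ℝ) :
    Complex.exp (-(Complex.I * (x : ℂ))) ∈ unitary ℂ := by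
  rw [Unitary.mem_iff_star_mul_self, ← starRingEnd_apply, Complex.conj_mul', Complex.norm_exp]
  simp

theorem channel_covariant_under_unitary_conserved_quantity_general
    {ι n R : Type*} [Fintype ι] [Fintype n] [DecidableEq n] [CommRing R] [PartialOrder R]
    [StarRing R] [StarOrderedRing R] [NoZeroDivisors R] {E : ι → Matrix n n R}
    (hE : ∑ ℓ, (E ℓ)ᴴ * E ℓ = 1) {J : Matrix n n R} (hJ : J ∈ unitaryGroup n R)
    {c : R} (hc : c ∈ unitary R) (hcons : krausAdjoint E J = c • J) (ρ : Matrix n n R) :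
    J * krausMap E ρ * Jᴴ = krausMap E (J * ρ * Jᴴ) := by
  have hJJ : Jᴴ * J = 1 := mem_unitaryGroup_iff'.mp hJ
  have hcJ : (c • J)ᴴ * (c • J) = 1 :=
    mem_unitaryGroup_iff'.mp (Unitary.smul_mem_of_mem hc hJ)
  have hschwarz : krausAdjoint E (Jᴴ * J) = (krausAdjoint E J)ᴴ * krausAdjoint E J := by
    rw [hcons, hcJ, hJJ, krausAdjoint]
    simpa only [Matrix.mul_one] using hE
  have hphase : (c • J) * ρ * (c • J)ᴴ = J * ρ * Jᴴ := by
    rw [conjTranspose_smul, Matrix.smul_mul, Matrix.smul_mul, Matrix.mul_smul, smul_smul,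
      Unitary.mul_star_self_of_mem hc, one_smul]
  rw [mul_krausMap_mul_conjTranspose_eq hE hschwarz, hcons, hphase]

/-- A unitary conserved quantity `J` of a faithful Kraus channel is a symmetry
of the channel: `J E(ρ) Jᴴ = E(J ρ Jᴴ)` for all `ρ`. -/
theorem channel_covariant_under_unitary_conserved_quantity
    {D : ℕ} {ι : Type*} [Fintype ι]
    (E : ι → Matrix (Fin D) (Fin D) ℂ)
    (hKraus : ∑ ℓ, (E ℓ)ᴴ * E ℓ = 1)
    (hFaithful : ∃ ρ : Matrix (Fin D) (Fin D) ℂ,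
      ρ.PosDef ∧ ∑ ℓ, E ℓ * ρ * (E ℓ)ᴴ = ρ)
    (J : Matrix (Fin D) (Fin D) ℂ) (lam : ℝ)
    (hJunitary : Jᴴ * J = 1 ∧ J * Jᴴ = 1)
    (hJ : ∑ ℓ, (E ℓ)ᴴ * J * E ℓ = Complex.exp (-(Complex.I * (lam : ℂ))) • J) :
    ∀ ρ : Matrix (Fin D) (Fin D) ℂ,
      J * (∑ ℓ, E ℓ * ρ * (E ℓ)ᴴ) * Jᴴ = ∑ ℓ, E ℓ * (J * ρ * Jᴴ) * (E ℓ)ᴴ :=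
  channel_covariant_under_unitary_conserved_quantity_general hKraus hJunitary
    (exp_neg_I_mul_ofReal_mem_unitary lam) hJ
end

section
/- Let {E_ℓ} be a Kraus family on the d₁×d₁ complex matrices whose channel is faithful, let J be a conserved quantity with phase λ, and let {C_ℓ} be a family of d₁×d₂ complex matrices (indexed by the same finite index set) with ∑_ℓ E_ℓ† C_ℓ = 0. Then ∑_ℓ E_ℓ† J C_ℓ = 0 and ∑_ℓ C_ℓ† J E_ℓ = 0. -/
open Matrix ComplexOrder

/-! For `‖c‖ = 1`, the defects `D ℓ = J * E ℓ - c • (E ℓ * J)` satisfy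
`∑ ℓ, (D ℓ)ᴴ * D ℓ = ∑ ℓ, (E ℓ)ᴴ * (Jᴴ * J) * E ℓ - Jᴴ * J`. The trace of the right-hand side
against a fixed point `ρ` is zero, so if `ρ` is positive definite every `D ℓ` vanishes: `J` commutes
with the Kraus operators up to the phase `c` and can be pulled out of `∑ ℓ, (C ℓ)ᴴ * J * E ℓ`. The
other sum is the adjoint of this one for `Jᴴ`. The commutation holds more generally for a
`J` intertwining two families `E` and `F`, with `D ℓ = J * E ℓ - c • (F ℓ * J)`. -/

section StarRing

variable {ι m n p q R : Type*} [Fintype ι] [Fintype n] [Fintype p] [CommSemiring R] [StarRing R]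

lemma conjTranspose_sum_conjTranspose_mul_mul (A : ι → Matrix p m R) (X : Matrix p n R)
    (B : ι → Matrix n q R) :
    (∑ ℓ, (A ℓ)ᴴ * X * B ℓ)ᴴ = ∑ ℓ, (B ℓ)ᴴ * Xᴴ * A ℓ := by
  simp only [conjTranspose_sum, conjTranspose_mul, conjTranspose_conjTranspose, Matrix.mul_assoc]

lemma trace_sum_conjTranspose_mul_mul_mul (E : ι → Matrix p n R) (X : Matrix p p R)
    (ρ : Matrix n n R) :
    ((∑ ℓ, (E ℓ)ᴴ * X * E ℓ) * ρ).trace = (X * ∑ ℓ, E ℓ * ρ * (E ℓ)ᴴ).trace := by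
  simp only [Matrix.sum_mul, Matrix.mul_sum, trace_sum]
  refine Finset.sum_congr rfl fun ℓ _ ↦ ?_
  simpa only [Matrix.mul_assoc] using trace_mul_comm (E ℓ)ᴴ (X * E ℓ * ρ)

end StarRing

open scoped MatrixOrder in
lemma trace_mul_mul_conjTranspose_eq_zero_iff_of_posDef {n p 𝕜 : Type*} [Fintype n]
    [Fintype p] [RCLike 𝕜] {ρ : Matrix n n 𝕜} (hρ : ρ.PosDef) {D : Matrix p n 𝕜} :
    (D * ρ * Dᴴ).trace = 0 ↔ D = 0 := by
  classical
  obtain ⟨B, hB, rfl⟩ := CStarAlgebra.isStrictlyPositive_iff_eq_star_mul_self.1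
    hρ.isStrictlyPositive
  have factor : D * (Bᴴ * B) * Dᴴ = (D * Bᴴ) * (D * Bᴴ)ᴴ := by
    simp only [conjTranspose_mul, conjTranspose_conjTranspose, Matrix.mul_assoc]
  rw [star_eq_conjTranspose, factor, trace_mul_conjTranspose_self_eq_zero_iff]
  have hB_adj : IsUnit Bᴴ.det := (isUnit_iff_isUnit_det _).1 hB.star
  refine ⟨fun h ↦ ?_, fun h ↦ by rw [h, Matrix.zero_mul]⟩
  rw [← mul_nonsing_inv_cancel_right Bᴴ D hB_adj, h, Matrix.zero_mul]

section Intertwiner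

variable {ι m n p : Type*} [Fintype ι] [Fintype n] [Fintype p] [DecidableEq p]

lemma sum_conjTranspose_mul_self_sub_smul {R : Type*} [CommRing R] [StarRing R]
    {E : ι → Matrix n n R} {F : ι → Matrix p p R} (hF : ∑ ℓ, (F ℓ)ᴴ * F ℓ = 1)
    {J : Matrix p n R} {c : R} (hc : star c * c = 1) (hJ : ∑ ℓ, (F ℓ)ᴴ * J * E ℓ = c • J) :
    ∑ ℓ, (J * E ℓ - c • (F ℓ * J))ᴴ * (J * E ℓ - c • (F ℓ * J)) =
      ∑ ℓ, (E ℓ)ᴴ * (Jᴴ * J) * E ℓ - Jᴴ * J := by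
  have hJ_adj : ∑ ℓ, (E ℓ)ᴴ * Jᴴ * F ℓ = star c • Jᴴ := by
    rw [← conjTranspose_sum_conjTranspose_mul_mul, hJ, conjTranspose_smul]
  have expand (ℓ : ι) : (J * E ℓ - c • (F ℓ * J))ᴴ * (J * E ℓ - c • (F ℓ * J)) =
      (E ℓ)ᴴ * (Jᴴ * J) * E ℓ - c • (((E ℓ)ᴴ * Jᴴ * F ℓ) * J)
        - star c • (Jᴴ * ((F ℓ)ᴴ * J * E ℓ)) + (star c * c) • (Jᴴ * ((F ℓ)ᴴ * F ℓ) * J) := by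
    simp only [conjTranspose_sub, conjTranspose_mul, conjTranspose_smul, Matrix.sub_mul,
      Matrix.mul_sub, Matrix.smul_mul, Matrix.mul_smul, Matrix.mul_assoc, smul_sub, smul_smul,
      mul_comm c]
    abel
  calc ∑ ℓ, (J * E ℓ - c • (F ℓ * J))ᴴ * (J * E ℓ - c • (F ℓ * J))
    _ = ∑ ℓ, (E ℓ)ᴴ * (Jᴴ * J) * E ℓ - c • ((∑ ℓ, (E ℓ)ᴴ * Jᴴ * F ℓ) * J)
          - star c • (Jᴴ * ∑ ℓ, (F ℓ)ᴴ * J * E ℓ)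
          + (star c * c) • (Jᴴ * (∑ ℓ, (F ℓ)ᴴ * F ℓ) * J) := by
      simp only [expand, Finset.sum_add_distrib, Finset.sum_sub_distrib, Finset.smul_sum,
        Matrix.sum_mul, Matrix.mul_sum]
    _ = ∑ ℓ, (E ℓ)ᴴ * (Jᴴ * J) * E ℓ - Jᴴ * J := by
      simp [hJ, hJ_adj, hF, smul_smul, hc, mul_comm c]

variable {𝕜 : Type*} [RCLike 𝕜]

lemma mul_eq_smul_mul_of_posDef {E : ι → Matrix n n 𝕜} {F : ι → Matrix p p 𝕜}
    (hF : ∑ ℓ, (F ℓ)ᴴ * F ℓ = 1) {ρ : Matrix n n 𝕜} (hρ : ρ.PosDef)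
    (hE : ∑ ℓ, E ℓ * ρ * (E ℓ)ᴴ = ρ) {J : Matrix p n 𝕜} {c : 𝕜} (hc : ‖c‖ = 1)
    (hJ : ∑ ℓ, (F ℓ)ᴴ * J * E ℓ = c • J) (ℓ : ι) : J * E ℓ = c • (F ℓ * J) := by
  let D (ℓ : ι) : Matrix p n 𝕜 := J * E ℓ - c • (F ℓ * J)
  have star_mul_eq_one : star c * c = 1 := by simp [RCLike.star_def, RCLike.conj_mul, hc]
  have trace_sum_eq_zero : ∑ ℓ, (D ℓ * ρ * (D ℓ)ᴴ).trace = 0 := calc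
    ∑ ℓ, (D ℓ * ρ * (D ℓ)ᴴ).trace
    _ = ((∑ ℓ, (D ℓ)ᴴ * D ℓ) * ρ).trace := by
      simp only [Matrix.sum_mul, trace_sum, trace_mul_cycle (D _) ρ]
    _ = ((∑ ℓ, (E ℓ)ᴴ * (Jᴴ * J) * E ℓ) * ρ).trace - (Jᴴ * J * ρ).trace := by
      rw [sum_conjTranspose_mul_self_sub_smul hF star_mul_eq_one hJ, Matrix.sub_mul, trace_sub]
    _ = 0 := by rw [trace_sum_conjTranspose_mul_mul_mul, hE, sub_self]
  have trace_eq_zero : (D ℓ * ρ * (D ℓ)ᴴ).trace = 0 :=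
    (Finset.sum_eq_zero_iff_of_nonneg fun ℓ _ ↦
      (hρ.posSemidef.mul_mul_conjTranspose_same (D ℓ)).trace_nonneg).1 trace_sum_eq_zero ℓ
      (Finset.mem_univ ℓ)
  exact sub_eq_zero.1 ((trace_mul_mul_conjTranspose_eq_zero_iff_of_posDef hρ).1 trace_eq_zero)

lemma sum_conjTranspose_mul_mul_eq_zero_of_posDef {E : ι → Matrix n n 𝕜}
    {F : ι → Matrix p p 𝕜} (hF : ∑ ℓ, (F ℓ)ᴴ * F ℓ = 1) {ρ : Matrix n n 𝕜} (hρ : ρ.PosDef)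
    (hE : ∑ ℓ, E ℓ * ρ * (E ℓ)ᴴ = ρ) {J : Matrix p n 𝕜} {c : 𝕜} (hc : ‖c‖ = 1)
    (hJ : ∑ ℓ, (F ℓ)ᴴ * J * E ℓ = c • J) {C : ι → Matrix p m 𝕜}
    (hC : ∑ ℓ, (F ℓ)ᴴ * C ℓ = 0) : ∑ ℓ, (C ℓ)ᴴ * J * E ℓ = 0 := by
  have hC_adj : ∑ ℓ, (C ℓ)ᴴ * F ℓ = 0 := by
    simpa [conjTranspose_sum] using congrArg conjTranspose hC
  calc ∑ ℓ, (C ℓ)ᴴ * J * E ℓ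
    _ = c • ((∑ ℓ, (C ℓ)ᴴ * F ℓ) * J) := by
      simp only [Matrix.mul_assoc, mul_eq_smul_mul_of_posDef hF hρ hE hc hJ, Matrix.mul_smul,
        Matrix.sum_mul, Finset.smul_sum]
    _ = 0 := by rw [hC_adj, Matrix.zero_mul, smul_zero]

end Intertwiner

theorem conserved_quantity_offdiagonal_vanishing_general {ι m n 𝕜 : Type*} [Fintype ι] [Fintype n]
    [DecidableEq n] [RCLike 𝕜] {E : ι → Matrix n n 𝕜}
    (hKraus : ∑ ℓ, (E ℓ)ᴴ * E ℓ = 1)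
    (hFaithful : ∃ ρ : Matrix n n 𝕜, ρ.PosDef ∧ ∑ ℓ, E ℓ * ρ * (E ℓ)ᴴ = ρ)
    {J : Matrix n n 𝕜} {c : 𝕜} (hc : ‖c‖ = 1) (hJ : ∑ ℓ, (E ℓ)ᴴ * J * E ℓ = c • J)
    {C : ι → Matrix n m 𝕜} (hC : ∑ ℓ, (E ℓ)ᴴ * C ℓ = 0) :
    (∑ ℓ, (E ℓ)ᴴ * J * C ℓ = 0) ∧ (∑ ℓ, (C ℓ)ᴴ * J * E ℓ = 0) := by
  obtain ⟨ρ, hρ, hE⟩ := hFaithful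
  refine ⟨?_, sum_conjTranspose_mul_mul_eq_zero_of_posDef hKraus hρ hE hc hJ hC⟩
  have hJ_adj : ∑ ℓ, (E ℓ)ᴴ * Jᴴ * E ℓ = star c • Jᴴ := by
    rw [← conjTranspose_sum_conjTranspose_mul_mul, hJ, conjTranspose_smul]
  have h_adj : ∑ ℓ, (C ℓ)ᴴ * Jᴴ * E ℓ = 0 :=
    sum_conjTranspose_mul_mul_eq_zero_of_posDef hKraus hρ hE ((norm_star c).trans hc) hJ_adj hC
  rwa [← conjTranspose_eq_zero, conjTranspose_sum_conjTranspose_mul_mul]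

/-- If `{Eℓ}` is a faithful Kraus family on `d₁ × d₁` matrices, `J` a conserved
quantity with phase `λ`, and `{Cℓ}` are `d₁ × d₂` matrices with `∑ ℓ, Eℓᴴ Cℓ = 0`, then
`∑ ℓ, Eℓᴴ J Cℓ = 0` and `∑ ℓ, Cℓᴴ J Eℓ = 0`. -/
theorem conserved_quantity_offdiagonal_vanishing
    {d₁ d₂ : ℕ} {ι : Type*} [Fintype ι]
    (E : ι → Matrix (Fin d₁) (Fin d₁) ℂ)
    (hKraus : ∑ ℓ, (E ℓ)ᴴ * E ℓ = 1)
    (hFaithful : ∃ ρ : Matrix (Fin d₁) (Fin d₁) ℂ,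
      ρ.PosDef ∧ ∑ ℓ, E ℓ * ρ * (E ℓ)ᴴ = ρ)
    (J : Matrix (Fin d₁) (Fin d₁) ℂ) (lam : ℝ)
    (hJ : ∑ ℓ, (E ℓ)ᴴ * J * E ℓ = Complex.exp (-(Complex.I * (lam : ℂ))) • J)
    (C : ι → Matrix (Fin d₁) (Fin d₂) ℂ)
    (hC : ∑ ℓ, (E ℓ)ᴴ * C ℓ = 0) :
    (∑ ℓ, (E ℓ)ᴴ * J * C ℓ = 0) ∧ (∑ ℓ, (C ℓ)ᴴ * J * E ℓ = 0) :=
  conserved_quantity_offdiagonal_vanishing_general hKraus hFaithful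
    (by simp [Complex.norm_exp]) hJ hC
end
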